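/- (Kelly's theorem.) Let P be a finite set of more than 2 points in the affine space ℂ^n. If P is not contained in any 2-dimensional affine subspace (plane) of ℂ^n, then there exists a line in ℂ^n containing exactly two points of P. -/

import Mathlib

/-!
Suppose that no line contains exactly two of the `N` given points. Then the collinear triples, each
weighted by `1 / (m - 2)` where `m` is the number of points on its line, cover every pair of points
with total weight `1`. Each triple carries an affine dependence with three nonzero coefficients; let
`A` be the matrix with these dependencies as rows. Its row space consists of affine dependencies,
so the affine span of the points has dimension less than `N - rank A`, and it suffices to show
`rank A > N - 4`.

Rank does not increase when rows and columns of `A` are rescaled, and a rescaling exists for which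
the rows are unit vectors and the weighted norms of the columns are all equal: the column factors
are exponentials of a minimiser of a log-sum-exp potential, which is coercive modulo constants
because any two points lie in a common triple. After rescaling, the weighted Gram matrix
`M = Bᴴ diag(w) B` has a constant diagonal, and by Cauchy-Schwarz its off-diagonal entries are
small, since every pair has total weight `1`. Now `|tr M|² ≤ rank M * ‖M‖²` (Frobenius norm) gives
`N (N - 1) ≤ rank A * (N + 3)`, which excludes `rank A ≤ N - 4`. This is the rank bound for design
matrices of Barak, Dvir, Wigderson and Yehudayoff, in the sharp form of Dvir, Saraf and Wigderson.
-/

open Finset Module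

section RankTrace

variable {𝕜 n : Type*} [RCLike 𝕜] [Fintype n]

lemma sum_norm_sq_eq_sum_eigenvalues_sq [DecidableEq n] {A : Matrix n n 𝕜} (hA : A.IsHermitian) :
    ∑ i, ∑ j, ‖A i j‖ ^ 2 = ∑ i, hA.eigenvalues i ^ 2 := by
  have h_entries : (A * A).trace = ((∑ i, ∑ j, ‖A i j‖ ^ 2 : ℝ) : 𝕜) := by
    push_cast
    refine sum_congr rfl fun i _ ↦ ?_
    rw [Matrix.diag_apply, Matrix.mul_apply]
    exact sum_congr rfl fun j _ ↦ by rw [← hA.apply j i]; exact RCLike.mul_conj _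
  have h_eigenvalues : (A * A).trace = ((∑ i, hA.eigenvalues i ^ 2 : ℝ) : 𝕜) := by
    conv_lhs => rw [hA.spectral_theorem, ← map_mul, Matrix.diagonal_mul_diagonal,
      Unitary.conjStarAlgAut_apply, Matrix.trace_mul_comm, ← mul_assoc]
    simp [Matrix.trace_diagonal, ← pow_two]
  exact RCLike.ofReal_injective (K := 𝕜) (h_entries.symm.trans h_eigenvalues)

lemma norm_trace_sq_le_rank_mul_sum_norm_sq {A : Matrix n n 𝕜} (hA : A.IsHermitian) :
    ‖A.trace‖ ^ 2 ≤ A.rank * ∑ i, ∑ j, ‖A i j‖ ^ 2 := by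
  classical
  have h_trace : ‖A.trace‖ = |∑ i with hA.eigenvalues i ≠ 0, hA.eigenvalues i| := by
    rw [sum_filter_ne_zero, hA.trace_eq_sum_eigenvalues, ← RCLike.ofReal_sum, RCLike.norm_ofReal]
  have h_rank : A.rank = #{i | hA.eigenvalues i ≠ 0} := by
    rw [hA.rank_eq_card_non_zero_eigs, Fintype.card_subtype]
  rw [h_trace, sq_abs, h_rank, sum_norm_sq_eq_sum_eigenvalues_sq hA]
  refine sq_sum_le_card_mul_sum_sq.trans ?_
  gcongr
  exact subset_univ _

end RankTrace

section AffineRank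

variable {k V P ι R : Type*} [Field k] [AddCommGroup V] [Module k V] [AddTorsor V P]
  [Fintype ι] [Nonempty ι] [Finite R]

lemma finrank_vectorSpan_add_rank_lt_card (p : ι → P) {A : Matrix R ι k}
    (hA_sum : ∀ r, ∑ i, A r i = 0) (hA_vsub : ∀ r, univ.weightedVSub p (A r) = 0) :
    finrank k (vectorSpan k (Set.range p)) + A.rank < Fintype.card ι := by
  classical
  obtain ⟨i₀⟩ := ‹Nonempty ι›
  let φ : (ι → k) →ₗ[k] V := Fintype.linearCombination k fun i ↦ p i -ᵥ p i₀
  have h_range : φ.range = vectorSpan k (Set.range p) := by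
    rw [Fintype.range_linearCombination, vectorSpan_range_eq_span_range_vsub_right k p i₀]
  have h_rows : Submodule.span k (Set.range A.row) ≤ φ.ker := by
    rw [Submodule.span_le, Set.range_subset_iff]
    intro r
    have := hA_vsub r
    rwa [weightedVSub_eq_weightedVSubOfPoint_of_sum_eq_zero _ _ _ (hA_sum r) (p i₀),
      weightedVSubOfPoint_apply] at this
  have h_rows_sum : Submodule.span k (Set.range A.row) ≤
      (Fintype.linearCombination k fun _ : ι ↦ (1 : k)).ker := by
    rw [Submodule.span_le, Set.range_subset_iff]
    intro r
    simpa [Fintype.linearCombination_apply] using hA_sum r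
  have h_single_mem : Pi.single i₀ 1 ∈ φ.ker := by simp [φ]
  have h_single_notMem : Pi.single i₀ 1 ∉ Submodule.span k (Set.range A.row) := fun h ↦ by
    simpa using h_rows_sum h
  have h_lt : A.rank < finrank k φ.ker := by
    rw [A.rank_eq_finrank_span_row]
    exact Submodule.finrank_lt_finrank_of_lt
      (h_rows.lt_of_not_ge fun h ↦ h_single_notMem (h h_single_mem))
  have h_nullity := φ.finrank_range_add_finrank_ker
  rw [h_range, finrank_fintype_fun_eq_card] at h_nullity
  omega

end AffineRank

section Scaling

open Real Function

variable {ι R : Type*}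

/-- The log-sum-exp potential of a single block `s` with coefficients `b`. The mean of `t` over `s`
is subtracted to make it invariant under adding a constant to `t`. -/
noncomputable def blockPotential (s : Finset ι) (b t : ι → ℝ) : ℝ :=
  log (∑ j ∈ s, b j * exp (t j)) - (∑ j ∈ s, t j) / #s

section Block

variable {s : Finset ι} {b : ι → ℝ}

lemma sum_mul_exp_pos (hs : s.Nonempty) (hb : ∀ i ∈ s, 0 < b i) (t : ι → ℝ) :
    0 < ∑ j ∈ s, b j * exp (t j) :=
  sum_pos (fun j hj ↦ mul_pos (hb j hj) (exp_pos _)) hs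

lemma continuous_blockPotential (hs : s.Nonempty) (hb : ∀ i ∈ s, 0 < b i) :
    Continuous (blockPotential s b) :=
  .sub (.log (by fun_prop) fun t ↦ (sum_mul_exp_pos hs hb t).ne') (by fun_prop)

lemma blockPotential_sub_const (hs : s.Nonempty) (hb : ∀ i ∈ s, 0 < b i) (t : ι → ℝ) (c : ℝ) :
    blockPotential s b (fun j ↦ t j - c) = blockPotential s b t := by
  have h_card : (#s : ℝ) ≠ 0 := by exact_mod_cast hs.card_ne_zero
  have h_log : log (∑ j ∈ s, b j * exp (t j - c)) = log (∑ j ∈ s, b j * exp (t j)) - c := by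
    simp_rw [exp_sub, ← mul_div_assoc, ← sum_div]
    rw [log_div (sum_mul_exp_pos hs hb t).ne' (exp_pos c).ne', log_exp]
  rw [blockPotential, blockPotential, h_log, sum_sub_distrib, sum_const, nsmul_eq_mul]
  field_simp
  ring

lemma sub_div_card_le_blockPotential_add (hb : ∀ i ∈ s, 0 < b i) {i j : ι} (hi : i ∈ s)
    (hj : j ∈ s) (t : ι → ℝ) :
    (t i - t j) / #s ≤ blockPotential s b t + ∑ l ∈ s, |log (b l)| := by
  set L := log (∑ l ∈ s, b l * exp (t l))
  set C := ∑ l ∈ s, |log (b l)|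
  have h_card : (0 : ℝ) < #s := by exact_mod_cast card_pos.2 ⟨i, hi⟩
  have h_log : ∀ l ∈ s, 0 ≤ L + C - t l := fun l hl ↦ by
    have h_exp : ∀ l ∈ s, 0 < b l * exp (t l) := fun l hl ↦ mul_pos (hb l hl) (exp_pos _)
    have h_le : log (b l * exp (t l)) ≤ L :=
      log_le_log (h_exp l hl) (single_le_sum (fun l hl ↦ (h_exp l hl).le) hl)
    rw [log_mul (hb l hl).ne' (exp_pos _).ne', log_exp] at h_le
    have h_abs : -log (b l) ≤ C :=
      (neg_le_abs _).trans (single_le_sum (f := fun l ↦ |log (b l)|) (fun _ _ ↦ abs_nonneg _) hl)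
    linarith
  rw [div_le_iff₀ h_card]
  calc t i - t j ≤ L + C - t j := by linarith [h_log i hi]
    _ ≤ ∑ l ∈ s, (L + C - t l) := single_le_sum h_log hj
    _ = (blockPotential s b t + C) * #s := by
      rw [sum_sub_distrib, sum_const, nsmul_eq_mul, blockPotential]
      field_simp
      ring

lemma hasDerivAt_blockPotential_update [Finite ι] [DecidableEq ι] (hs : s.Nonempty)
    (hb : ∀ i ∈ s, 0 < b i) (t : ι → ℝ) (l : ι) :
    HasDerivAt (fun y ↦ blockPotential s b (update t l y))
      (if l ∈ s then b l * exp (t l) / ∑ j ∈ s, b j * exp (t j) - 1 / #s else 0) (t l) := by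
  have := Fintype.ofFinite ι
  have h_coord : ∀ j, HasDerivAt (fun y ↦ update t l y j) ((Pi.single l 1 : ι → ℝ) j) (t l) :=
    hasDerivAt_pi.1 (hasDerivAt_update t l (t l))
  have h_sum := HasDerivAt.fun_sum (u := s) fun j _ ↦ (h_coord j).exp.const_mul (b j)
  have h_log := h_sum.log (by simpa using (sum_mul_exp_pos hs hb t).ne')
  have h_mean := (HasDerivAt.fun_sum (u := s) fun j _ ↦ h_coord j).div_const (#s : ℝ)
  refine (h_log.sub h_mean).congr_deriv ?_
  split_ifs with hl <;> simp [Pi.single_apply, hl]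

end Block

/-- The weighted sum of the block potentials. At a critical point `t`, multiplying the coefficients
`b r i` by `exp (t i)` and normalising each block to sum `1` balances the weighted column sums. -/
noncomputable def scalingPotential [Fintype R] (S : R → Finset ι) (w : R → ℝ) (b : R → ι → ℝ)
    (t : ι → ℝ) : ℝ :=
  ∑ r, w r * blockPotential (S r) (b r) t

variable [Fintype R] {S : R → Finset ι} {w : R → ℝ} {b : R → ι → ℝ}

lemma exists_sub_le_of_scalingPotential_le (hw : ∀ r, 0 < w r) (hS : ∀ r, (S r).Nonempty)
    (hb : ∀ r, ∀ i ∈ S r, 0 < b r i) {r : R} {i j : ι} (hi : i ∈ S r) (hj : j ∈ S r) (a : ℝ) :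
    ∃ M, ∀ t, scalingPotential S w b t ≤ a → t i - t j ≤ M := by
  let C : R → ℝ := fun r ↦ ∑ l ∈ S r, |log (b r l)|
  refine ⟨(a + ∑ r, w r * C r) / w r * #(S r), fun t ht ↦ ?_⟩
  have h_nonneg : ∀ q ∈ univ, 0 ≤ w q * (blockPotential (S q) (b q) t + C q) := fun q _ ↦ by
    obtain ⟨l, hl⟩ := hS q
    have := sub_div_card_le_blockPotential_add (hb q) hl hl t
    exact mul_nonneg (hw q).le (by simpa using this)
  have h_card : (0 : ℝ) < #(S r) := by exact_mod_cast (hS r).card_pos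
  rw [← div_le_iff₀ h_card, le_div_iff₀' (hw r)]
  calc w r * ((t i - t j) / #(S r))
      ≤ w r * (blockPotential (S r) (b r) t + C r) := by
        gcongr
        · exact (hw r).le
        · exact sub_div_card_le_blockPotential_add (hb r) hi hj t
    _ ≤ ∑ q, w q * (blockPotential (S q) (b q) t + C q) := single_le_sum h_nonneg (mem_univ r)
    _ = scalingPotential S w b t + ∑ q, w q * C q := by
        simp_rw [mul_add, sum_add_distrib, scalingPotential]
    _ ≤ a + ∑ q, w q * C q := by gcongr

lemma exists_forall_scalingPotential_le [Finite ι] (hw : ∀ r, 0 < w r)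
    (hS : ∀ r, (S r).Nonempty) (hS_pair : ∀ i j, i ≠ j → ∃ r, i ∈ S r ∧ j ∈ S r)
    (hb : ∀ r, ∀ i ∈ S r, 0 < b r i) :
    ∃ t, ∀ u, scalingPotential S w b t ≤ scalingPotential S w b u := by
  rcases isEmpty_or_nonempty ι with _ | ⟨⟨i₀⟩⟩
  · exact ⟨0, fun u ↦ (congrArg _ (Subsingleton.elim 0 u)).le⟩
  have := Fintype.ofFinite ι
  have h_cont : Continuous (scalingPotential S w b) := continuous_finsetSum _ fun r _ ↦
    (continuous_blockPotential (hS r) (hb r)).const_mul (w r)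
  have h_shift (t : ι → ℝ) (c : ℝ) :
      scalingPotential S w b (fun j ↦ t j - c) = scalingPotential S w b t :=
    sum_congr rfl fun r _ ↦ by rw [blockPotential_sub_const (hS r) (hb r)]
  have h_bdd (i j : ι) :
      ∃ M, ∀ t, scalingPotential S w b t ≤ scalingPotential S w b 0 → t i - t j ≤ M := by
    by_cases hij : i = j
    · exact ⟨0, fun t _ ↦ by simp [hij]⟩
    · obtain ⟨r, hi, hj⟩ := hS_pair i j hij
      exact exists_sub_le_of_scalingPotential_le hw hS hb hi hj _
  choose M hM using h_bdd
  obtain ⟨B, hB⟩ := (Set.finite_range (Function.uncurry M)).bddAbove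
  have hM_le (i j : ι) : M i j ≤ B := hB ⟨(i, j), rfl⟩
  have hB_nonneg : 0 ≤ B := by simpa using (hM i₀ i₀ 0 le_rfl).trans (hM_le i₀ i₀)
  obtain ⟨t, -, ht⟩ := (isCompact_closedBall (0 : ι → ℝ) B).exists_isMinOn
    ⟨0, Metric.mem_closedBall_self hB_nonneg⟩ h_cont.continuousOn
  refine ⟨t, fun u ↦ ?_⟩
  rcases le_total (scalingPotential S w b u) (scalingPotential S w b 0) with hu | hu
  · rw [← h_shift u (u i₀)]
    refine ht (mem_closedBall_zero_iff.2 <| (pi_norm_le_iff_of_nonneg hB_nonneg).2 fun i ↦ ?_)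
    rw [Real.norm_eq_abs, abs_sub_le_iff]
    exact ⟨(hM i i₀ u hu).trans (hM_le i i₀), (hM i₀ i u hu).trans (hM_le i₀ i)⟩
  · exact (ht (Metric.mem_closedBall_self hB_nonneg)).trans hu

theorem exists_pos_forall_sum_scaled_eq [Finite ι] [DecidableEq ι] (hw : ∀ r, 0 < w r)
    (hS : ∀ r, (S r).Nonempty) (hS_pair : ∀ i j, i ≠ j → ∃ r, i ∈ S r ∧ j ∈ S r)
    (hb : ∀ r, ∀ i ∈ S r, 0 < b r i) :
    ∃ x : ι → ℝ, (∀ i, 0 < x i) ∧ ∀ i,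
      ∑ r with i ∈ S r, w r * (b r i * x i / ∑ j ∈ S r, b r j * x j) =
        ∑ r with i ∈ S r, w r / #(S r) := by
  obtain ⟨t, ht⟩ := exists_forall_scalingPotential_le hw hS hS_pair hb
  refine ⟨fun i ↦ exp (t i), fun i ↦ exp_pos _, fun i ↦ ?_⟩
  have h_min : IsLocalMin (fun y ↦ scalingPotential S w b (update t i y)) (t i) :=
    .of_forall fun y ↦ by simpa only [update_eq_self] using ht (update t i y)
  have h_deriv := h_min.hasDerivAt_eq_zero <| HasDerivAt.fun_sum fun r _ ↦
    (hasDerivAt_blockPotential_update (hS r) (hb r) t i).const_mul (w r)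
  simp_rw [mul_ite, mul_zero, ← sum_filter, mul_sub, sum_sub_distrib, mul_one_div] at h_deriv
  exact sub_eq_zero.1 h_deriv

end Scaling

section MatrixScaling

variable {𝕜 ι R : Type*} [RCLike 𝕜] [Fintype ι] [Fintype R] {S : R → Finset ι} {w : R → ℝ}

lemma exists_scaled_matrix [DecidableEq ι] (hw : ∀ r, 0 < w r) (hS : ∀ r, (S r).Nonempty)
    (hS_pair : ∀ i j, i ≠ j → ∃ r, i ∈ S r ∧ j ∈ S r) {A : Matrix R ι 𝕜}
    (hA : ∀ r i, A r i ≠ 0 ↔ i ∈ S r) :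
    ∃ B : Matrix R ι 𝕜, B.rank ≤ A.rank ∧ (∀ r i, B r i ≠ 0 → i ∈ S r) ∧
      (∀ r, ∑ i, ‖B r i‖ ^ 2 = 1) ∧
      ∀ i, ∑ r, w r * ‖B r i‖ ^ 2 = ∑ r with i ∈ S r, w r / #(S r) := by
  classical
  have hA_pos : ∀ r, ∀ i ∈ S r, 0 < ‖A r i‖ ^ 2 := fun r i hi ↦
    pow_pos (norm_pos_iff.2 ((hA r i).2 hi)) 2
  obtain ⟨x, hx, h_scaled⟩ := exists_pos_forall_sum_scaled_eq hw hS hS_pair hA_pos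
  let D : R → ℝ := fun r ↦ ∑ j ∈ S r, ‖A r j‖ ^ 2 * x j
  have hD : ∀ r, 0 < D r := fun r ↦ sum_pos (fun j hj ↦ mul_pos (hA_pos r j hj) (hx j)) (hS r)
  let B : Matrix R ι 𝕜 := Matrix.diagonal (fun r ↦ ((√(D r))⁻¹ : 𝕜)) * A *
    Matrix.diagonal (fun i ↦ (√(x i) : 𝕜))
  have hB_apply (r : R) (i : ι) : B r i = (√(D r) : 𝕜)⁻¹ * A r i * √(x i) := by
    simp [B, Matrix.mul_diagonal, Matrix.diagonal_mul]
  have hB_norm (r : R) (i : ι) : ‖B r i‖ ^ 2 = ‖A r i‖ ^ 2 * x i / D r := by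
    rw [hB_apply, norm_mul, norm_mul, norm_inv, RCLike.norm_ofReal, RCLike.norm_ofReal, mul_pow,
      mul_pow, inv_pow, sq_abs, sq_abs, Real.sq_sqrt (hD r).le, Real.sq_sqrt (hx i).le]
    ring
  have hB_mem (r : R) (i : ι) (hi : B r i ≠ 0) : i ∈ S r :=
    (hA r i).1 fun h ↦ hi (by simp [hB_apply, h])
  refine ⟨B, (Matrix.rank_mul_le_left _ _).trans (Matrix.rank_mul_le_right _ _), hB_mem,
    fun r ↦ ?_, fun i ↦ ?_⟩
  · have h_subset : ∑ i ∈ S r, ‖B r i‖ ^ 2 = ∑ i, ‖B r i‖ ^ 2 :=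
      sum_subset (subset_univ _) fun i _ hi ↦ by simp [not_imp_comm.1 (hB_mem r i) hi]
    rw [← h_subset]
    simp_rw [hB_norm, ← sum_div]
    exact div_self (hD r).ne'
  · have h_filter : ∑ r with i ∈ S r, w r * ‖B r i‖ ^ 2 = ∑ r, w r * ‖B r i‖ ^ 2 :=
      sum_filter_of_ne fun r _ h ↦ hB_mem r i fun h0 ↦ h (by simp [h0])
    rw [← h_filter, ← h_scaled i]
    simp_rw [hB_norm, D]

end MatrixScaling

section WeightedGram

open scoped Matrix

variable {𝕜 ι R : Type*} [RCLike 𝕜] [Fintype R] {S : R → Finset ι} {w : R → ℝ} {B : Matrix R ι 𝕜}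

/-- The weighted Gram matrix `Bᴴ diag(w) B` of the columns of `B`. -/
def weightedGram (w : R → ℝ) (B : Matrix R ι 𝕜) : Matrix ι ι 𝕜 :=
  Bᴴ * Matrix.of fun r i ↦ (w r : 𝕜) * B r i

lemma weightedGram_apply (w : R → ℝ) (B : Matrix R ι 𝕜) (i j : ι) :
    weightedGram w B i j = ∑ r, (w r : 𝕜) * (star (B r i) * B r j) := by
  rw [weightedGram, Matrix.mul_apply]
  exact sum_congr rfl fun r _ ↦ by
    rw [Matrix.conjTranspose_apply, Matrix.of_apply]
    ring

lemma weightedGram_apply_self (w : R → ℝ) (B : Matrix R ι 𝕜) (i : ι) :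
    weightedGram w B i i = ((∑ r, w r * ‖B r i‖ ^ 2 : ℝ) : 𝕜) := by
  rw [weightedGram_apply]
  push_cast
  exact sum_congr rfl fun r _ ↦ congrArg _ (RCLike.conj_mul _)

lemma isHermitian_weightedGram (w : R → ℝ) (B : Matrix R ι 𝕜) : (weightedGram w B).IsHermitian :=
  .ext fun i j ↦ by simp [weightedGram_apply, mul_comm]

lemma trace_weightedGram [Fintype ι] (hB_row : ∀ r, ∑ i, ‖B r i‖ ^ 2 = 1) :
    (weightedGram w B).trace = ((∑ r, w r : ℝ) : 𝕜) := by
  simp_rw [Matrix.trace, Matrix.diag_apply, weightedGram_apply_self, ← RCLike.ofReal_sum]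
  rw [sum_comm]
  simp_rw [← mul_sum, hB_row, mul_one]

lemma norm_weightedGram_sq_le [DecidableEq ι] (hw : ∀ r, 0 ≤ w r)
    (hB : ∀ r i, B r i ≠ 0 → i ∈ S r) (i j : ι) :
    ‖weightedGram w B i j‖ ^ 2 ≤
      (∑ r with i ∈ S r ∧ j ∈ S r, w r) * ∑ r, w r * (‖B r i‖ ^ 2 * ‖B r j‖ ^ 2) := by
  have h_norm : ‖weightedGram w B i j‖ ≤
      ∑ r with i ∈ S r ∧ j ∈ S r, w r * (‖B r i‖ * ‖B r j‖) := by
    rw [weightedGram_apply, ← sum_filter_of_ne (p := fun r ↦ i ∈ S r ∧ j ∈ S r)]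
    · refine (norm_sum_le _ _).trans_eq (sum_congr rfl fun r _ ↦ ?_)
      rw [norm_mul, norm_mul, norm_star, RCLike.norm_of_nonneg (hw r)]
    · intro r _ h
      exact ⟨hB r i fun h0 ↦ h (by simp [h0]), hB r j fun h0 ↦ h (by simp [h0])⟩
  have h_nonneg (r : R) : 0 ≤ w r * (‖B r i‖ ^ 2 * ‖B r j‖ ^ 2) :=
    mul_nonneg (hw r) (by positivity)
  calc ‖weightedGram w B i j‖ ^ 2
      ≤ (∑ r with i ∈ S r ∧ j ∈ S r, w r * (‖B r i‖ * ‖B r j‖)) ^ 2 := by gcongr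
    _ ≤ (∑ r with i ∈ S r ∧ j ∈ S r, w r) *
        ∑ r with i ∈ S r ∧ j ∈ S r, w r * (‖B r i‖ ^ 2 * ‖B r j‖ ^ 2) :=
      sum_sq_le_sum_mul_sum_of_sq_le_mul _ (fun r _ ↦ hw r) (fun r _ ↦ h_nonneg r)
        fun r _ ↦ by rw [mul_pow, mul_pow, pow_two (w r), mul_assoc]
    _ ≤ _ := by
      gcongr
      · exact sum_nonneg fun r _ ↦ hw r
      · exact fun r _ _ ↦ h_nonneg r
      · exact filter_subset _ _

open scoped ComplexOrder in
lemma rank_weightedGram_le [Fintype ι] (w : R → ℝ) (B : Matrix R ι 𝕜) :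
    (weightedGram w B).rank ≤ B.rank := by
  rw [← B.rank_conjTranspose]
  exact Matrix.rank_mul_le_left _ _

end WeightedGram

section FractionalSteinerSystem

variable {ι R : Type*} [Fintype R] [DecidableEq ι] {k : ℕ} {S : R → Finset ι} {w : R → ℝ}

/-- A fractional Steiner system: an indexed family of `k`-element blocks with positive weights such
that the blocks through any two distinct points have total weight `1`. With unit weights this is a
Steiner system `S(2, k, N)`. -/
structure IsFractionalSteinerSystem (k : ℕ) (S : R → Finset ι) (w : R → ℝ) : Prop where
  card_block : ∀ r, #(S r) = k
  weight_pos : ∀ r, 0 < w r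
  sum_weight_pair : ∀ i j, i ≠ j → ∑ r with i ∈ S r ∧ j ∈ S r, w r = 1

namespace IsFractionalSteinerSystem

variable (h : IsFractionalSteinerSystem k S w)
include h

lemma exists_block_of_ne (i j : ι) (hij : i ≠ j) : ∃ r, i ∈ S r ∧ j ∈ S r := by
  obtain ⟨r, hr, -⟩ := exists_ne_zero_of_sum_ne_zero
    ((h.sum_weight_pair i j hij).trans_ne one_ne_zero)
  exact ⟨r, (mem_filter.1 hr).2⟩

variable [Fintype ι]

lemma sum_weight_mem_mul (i : ι) :
    (∑ r with i ∈ S r, w r) * ((k : ℝ) - 1) = Fintype.card ι - 1 := by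
  have h_card : ∀ {s : Finset ι}, i ∈ s → (#(s.erase i) : ℝ) = #s - 1 := fun hi ↦ by
    rw [← card_erase_add_one hi]
    push_cast
    ring
  symm
  calc (Fintype.card ι : ℝ) - 1 = ∑ j ∈ univ.erase i, ∑ r with i ∈ S r ∧ j ∈ S r, w r := by
        rw [sum_congr rfl fun _ hj ↦ h.sum_weight_pair i _ (ne_of_mem_erase hj).symm, sum_const,
          nsmul_eq_mul, h_card (mem_univ i), mul_one, card_univ]
    _ = ∑ r with i ∈ S r, ∑ _ ∈ (S r).erase i, w r := sum_comm' (by simp; tauto)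
    _ = (∑ r with i ∈ S r, w r) * (k - 1) := by
        rw [sum_mul]
        refine sum_congr rfl fun r hr ↦ ?_
        rw [sum_const, nsmul_eq_mul, h_card (mem_filter.1 hr).2, h.card_block, mul_comm]

lemma sum_sum_weight_mem : ∑ i : ι, ∑ r with i ∈ S r, w r = k * ∑ r, w r := by
  calc ∑ i, ∑ r with i ∈ S r, w r = ∑ r, ∑ _ ∈ S r, w r := sum_comm' (by simp)
    _ = k * ∑ r, w r := by simp_rw [sum_const, h.card_block, nsmul_eq_mul, mul_sum]

section WeightedGram

variable {𝕜 : Type*} [RCLike 𝕜] {B : Matrix R ι 𝕜} (hB : ∀ r i, B r i ≠ 0 → i ∈ S r)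
  (hB_row : ∀ r, ∑ i, ‖B r i‖ ^ 2 = 1)
include hB hB_row

lemma one_le_mul_sum_norm_sq_sq (r : R) : 1 ≤ k * ∑ i, (‖B r i‖ ^ 2) ^ 2 := by
  have h_subset : ∑ i ∈ S r, ‖B r i‖ ^ 2 = 1 := by
    rw [← hB_row r]
    exact sum_subset (subset_univ _) fun i _ hi ↦ by simp [not_imp_comm.1 (hB r i) hi]
  calc 1 = (∑ i ∈ S r, ‖B r i‖ ^ 2) ^ 2 := by rw [h_subset, one_pow]
    _ ≤ k * ∑ i ∈ S r, (‖B r i‖ ^ 2) ^ 2 := by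
      rw [← h.card_block r]
      exact sq_sum_le_card_mul_sum_sq
    _ ≤ k * ∑ i, (‖B r i‖ ^ 2) ^ 2 := by
      gcongr
      exact subset_univ _

lemma sum_norm_weightedGram_sq_le (hk : 0 < k) :
    ∑ i, ∑ j, ‖weightedGram w B i j‖ ^ 2 ≤
      ∑ i, ‖weightedGram w B i i‖ ^ 2 + (1 - 1 / k) * ∑ r, w r := by
  have h_row_offdiag (r : R) :
      ∑ i, ∑ j ∈ univ.erase i, ‖B r i‖ ^ 2 * ‖B r j‖ ^ 2 ≤ 1 - 1 / k := by
    have h_erase (i : ι) : ∑ j ∈ univ.erase i, ‖B r j‖ ^ 2 = 1 - ‖B r i‖ ^ 2 := by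
      rw [sum_erase_eq_sub (mem_univ i), hB_row]
    have h_quartic : 1 / (k : ℝ) ≤ ∑ i, (‖B r i‖ ^ 2) ^ 2 := by
      rw [div_le_iff₀' (by exact_mod_cast hk)]
      exact h.one_le_mul_sum_norm_sq_sq hB hB_row r
    simp_rw [← mul_sum, h_erase, mul_sub, sum_sub_distrib, mul_one, hB_row, ← pow_two]
    gcongr
  have h_offdiag (i j : ι) (hij : i ≠ j) :
      ‖weightedGram w B i j‖ ^ 2 ≤ ∑ r, w r * (‖B r i‖ ^ 2 * ‖B r j‖ ^ 2) := by
    simpa only [h.sum_weight_pair i j hij, one_mul] using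
      norm_weightedGram_sq_le (fun r ↦ (h.weight_pos r).le) hB i j
  have h_split (i : ι) : ∑ j, ‖weightedGram w B i j‖ ^ 2 =
      ‖weightedGram w B i i‖ ^ 2 + ∑ j ∈ univ.erase i, ‖weightedGram w B i j‖ ^ 2 :=
    (add_sum_erase univ _ (mem_univ i)).symm
  simp_rw [h_split, sum_add_distrib]
  gcongr
  calc ∑ i, ∑ j ∈ univ.erase i, ‖weightedGram w B i j‖ ^ 2
      ≤ ∑ i, ∑ j ∈ univ.erase i, ∑ r, w r * (‖B r i‖ ^ 2 * ‖B r j‖ ^ 2) :=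
        sum_le_sum fun i _ ↦ sum_le_sum fun j hj ↦ h_offdiag i j (ne_of_mem_erase hj).symm
    _ = ∑ r, w r * ∑ i, ∑ j ∈ univ.erase i, ‖B r i‖ ^ 2 * ‖B r j‖ ^ 2 := by
        simp_rw [sum_comm (t := (univ : Finset R)), mul_sum]
    _ ≤ ∑ r, w r * (1 - 1 / k) := by
        gcongr with r
        · exact (h.weight_pos r).le
        · exact h_row_offdiag r
    _ = (1 - 1 / k) * ∑ r, w r := by rw [← sum_mul, mul_comm]

lemma sum_weight_le_rank_mul (hk : 0 < k) {c : ℝ} (hc : 0 ≤ c)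
    (hB_col : ∀ i, ∑ r, w r * ‖B r i‖ ^ 2 = c) :
    ∑ r, w r ≤ B.rank * (c + (1 - 1 / k)) := by
  set W := ∑ r, w r with hW
  have h_diag : ∑ i, ‖weightedGram w B i i‖ ^ 2 = W * c := by
    have h_mass : ∑ _ : ι, c = W := by
      rw [← sum_congr rfl fun i _ ↦ hB_col i, sum_comm]
      simp_rw [← mul_sum, hB_row, mul_one, hW]
    simp_rw [weightedGram_apply_self, hB_col, RCLike.norm_ofReal, sq_abs, pow_two]
    rw [← sum_mul, h_mass]
  have h_sq : W * W ≤ W * (B.rank * (c + (1 - 1 / k))) :=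
    calc W * W = ‖(weightedGram w B).trace‖ ^ 2 := by
          rw [trace_weightedGram hB_row, RCLike.norm_ofReal, sq_abs, pow_two]
      _ ≤ (weightedGram w B).rank * ∑ i, ∑ j, ‖weightedGram w B i j‖ ^ 2 :=
          norm_trace_sq_le_rank_mul_sum_norm_sq (isHermitian_weightedGram w B)
      _ ≤ B.rank * (W * c + (1 - 1 / k) * W) := by
          rw [← h_diag]
          exact mul_le_mul (Nat.cast_le.2 (rank_weightedGram_le w B))
            (h.sum_norm_weightedGram_sq_le hB hB_row hk)
            (sum_nonneg fun _ _ ↦ sum_nonneg fun _ _ ↦ sq_nonneg _) (Nat.cast_nonneg _)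
      _ = W * (B.rank * (c + (1 - 1 / k))) := by ring
  have h_nonneg : 0 ≤ W := sum_nonneg fun r _ ↦ (h.weight_pos r).le
  rcases h_nonneg.eq_or_lt with hW_zero | hW_pos
  · have : 0 ≤ 1 - 1 / (k : ℝ) := by simpa using Nat.cast_inv_le_one k
    rw [← hW_zero]
    positivity
  · exact le_of_mul_le_mul_left h_sq hW_pos

end WeightedGram

lemma sum_weight_mem_div_card (hk : 2 ≤ k) (i : ι) :
    ∑ r with i ∈ S r, w r / #(S r) = (Fintype.card ι - 1) / (k * (k - 1)) := by
  have hk_two : (2 : ℝ) ≤ k := by exact_mod_cast hk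
  rw [eq_div_iff (by nlinarith), ← h.sum_weight_mem_mul i]
  simp_rw [h.card_block, ← sum_div]
  field_simp

lemma sum_weight (hk : 2 ≤ k) :
    ∑ r, w r = Fintype.card ι * ((Fintype.card ι - 1) / (k * (k - 1))) := by
  have hk_ne : (k : ℝ) ≠ 0 := by exact_mod_cast (by omega : k ≠ 0)
  calc ∑ r, w r = ∑ i, ∑ r with i ∈ S r, w r / #(S r) := by
        simp_rw [h.card_block, ← sum_div, h.sum_sum_weight_mem]
        field_simp
    _ = _ := by simp_rw [h.sum_weight_mem_div_card hk, sum_const, card_univ, nsmul_eq_mul]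

theorem card_mul_card_sub_one_le_rank_mul [Nonempty ι] {𝕜 : Type*} [RCLike 𝕜] (hk : 2 ≤ k)
    {A : Matrix R ι 𝕜} (hA : ∀ r i, A r i ≠ 0 ↔ i ∈ S r) :
    Fintype.card ι * (Fintype.card ι - 1 : ℝ) ≤
      A.rank * (Fintype.card ι - 1 + (k - 1) ^ 2) := by
  have hS (r : R) : (S r).Nonempty := card_pos.1 (by rw [h.card_block]; omega)
  obtain ⟨B, hB_rank, hB, hB_row, hB_col⟩ :=
    exists_scaled_matrix h.weight_pos hS h.exists_block_of_ne hA
  simp_rw [h.sum_weight_mem_div_card hk] at hB_col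
  have h_total := h.sum_weight hk
  set N := (Fintype.card ι : ℝ)
  set c := (N - 1) / (k * (k - 1))
  have hk_two : (2 : ℝ) ≤ k := by exact_mod_cast hk
  have hN : 0 ≤ N - 1 := sub_nonneg.2 (Nat.one_le_cast.2 Fintype.card_pos)
  have hkk : 0 < (k : ℝ) * (k - 1) := by nlinarith
  have hc : k * (k - 1) * c = N - 1 := mul_div_cancel₀ _ hkk.ne'
  have hk_mul : k * (k - 1) * (1 - 1 / k) = ((k : ℝ) - 1) ^ 2 := by field_simp
  calc N * (N - 1) = k * (k - 1) * ∑ r, w r := by rw [h_total, ← hc]; ring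
    _ ≤ k * (k - 1) * (B.rank * (c + (1 - 1 / k))) := by
      gcongr
      exact h.sum_weight_le_rank_mul hB hB_row (by omega) (div_nonneg hN hkk.le) hB_col
    _ = B.rank * (N - 1 + (k - 1) ^ 2) := by rw [← hc, ← hk_mul]; ring
    _ ≤ A.rank * (N - 1 + (k - 1) ^ 2) := by gcongr

end IsFractionalSteinerSystem

end FractionalSteinerSystem

section SylvesterGallai

open scoped Affine

variable {k V E ι : Type*} [DivisionRing k] [AddCommGroup V] [Module k V] [AddTorsor V E]
  {p : ι → E}

variable (k) in
/-- A Sylvester–Gallai configuration: the line through any two of the points contains a third one.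
The points are given as an indexed family, whose indices are required to be distinct. -/
def IsSylvesterGallai (p : ι → E) : Prop :=
  ∀ i j, i ≠ j → ∃ l, l ≠ i ∧ l ≠ j ∧ p l ∈ line[k, p i, p j]

lemma isSylvesterGallai_subtype_val {P : Set E}
    (hP : ∀ ℓ : AffineSubspace k E, finrank k ℓ.direction = 1 → (P ∩ ℓ).encard ≠ 2) :
    IsSylvesterGallai k (Subtype.val : P → E) := by
  rintro ⟨x, hx⟩ ⟨y, hy⟩ hxy
  replace hxy : x ≠ y := Subtype.coe_ne_coe.2 hxy
  by_contra! h
  refine hP line[k, x, y] ?_ ?_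
  · rw [direction_affineSpan, vectorSpan_pair]
    exact finrank_span_singleton (vsub_ne_zero.2 hxy)
  · rw [← Set.encard_pair hxy]
    congr 1
    refine Set.Subset.antisymm ?_ <| Set.pair_subset ⟨hx, left_mem_affineSpan_pair k x y⟩
      ⟨hy, right_mem_affineSpan_pair k x y⟩
    rintro z ⟨hz, hz_line⟩
    by_contra hz_pair
    rw [Set.mem_insert_iff, Set.mem_singleton_iff, not_or] at hz_pair
    exact h ⟨z, hz⟩ (by simpa using hz_pair.1) (by simpa using hz_pair.2) hz_line

variable [Fintype ι]

lemma exists_affine_dependence_of_collinear (hp : p.Injective) {s : Finset ι} (hs : #s = 3)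
    (hs_col : Collinear k (p '' s)) :
    ∃ a : ι → k, (∀ i, a i ≠ 0 ↔ i ∈ s) ∧ ∑ i, a i = 0 ∧ univ.weightedVSub p a = 0 := by
  classical
  obtain ⟨i, j, l, hij, hil, hjl, rfl⟩ := card_eq_three.1 hs
  obtain ⟨t, ht⟩ : ∃ t : k, AffineMap.lineMap (p i) (p j) t = p l :=
    mem_affineSpan_pair_iff_exists_lineMap_eq.1 <|
      hs_col.mem_affineSpan_of_mem_of_ne ⟨i, by simp⟩ ⟨j, by simp⟩ ⟨l, by simp⟩ (hp.ne hij)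
  have ht0 : t ≠ 0 := by
    rintro rfl
    exact hil (hp (by simpa using ht))
  have ht1 : 1 - t ≠ 0 := fun h ↦ by
    rw [← sub_eq_zero.1 h] at ht
    exact hjl (hp (by simpa using ht))
  let a : ι → k := Pi.single i (1 - t) + Pi.single j t - Pi.single l 1
  have ha_sum : ∑ m, a m = 0 := by simp [a, sum_add_distrib]
  refine ⟨a, fun m ↦ ?_, ha_sum, ?_⟩
  · rcases eq_or_ne m i with rfl | hmi
    · simp [a, hij, hil, ht1]
    rcases eq_or_ne m j with rfl | hmj
    · simp [a, hmi, hjl, ht0]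
    rcases eq_or_ne m l with rfl | hml <;> simp [a, *]
  · rw [weightedVSub_eq_weightedVSubOfPoint_of_sum_eq_zero _ _ _ ha_sum (p i),
      weightedVSubOfPoint_apply]
    have h_line : p l -ᵥ p i = t • (p j -ᵥ p i) := by rw [← ht, AffineMap.lineMap_vsub_left]
    simp [a, add_smul, sub_smul, sum_add_distrib, Pi.single_apply, ite_smul, h_line]

variable (k p) in
open scoped Classical in
/-- The indices of all points `p i` in the affine span of the points indexed by `s`. It is mainly
used for a collinear `s`, where it is the set of points on a line. -/
noncomputable def indicesInSpan (s : Finset ι) : Finset ι :=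
  {i | p i ∈ affineSpan k (p '' s)}

lemma mem_indicesInSpan {s : Finset ι} {i : ι} :
    i ∈ indicesInSpan k p s ↔ p i ∈ affineSpan k (p '' s) := by
  simp [indicesInSpan]

lemma subset_indicesInSpan (s : Finset ι) : s ⊆ indicesInSpan k p s := fun _ hi ↦
  mem_indicesInSpan.2 (subset_affineSpan k _ ⟨_, hi, rfl⟩)

variable (k p) in
open scoped Classical in
/-- The collinear triples of points, as three-element sets of indices. -/
noncomputable def collinearTriples : Finset (Finset ι) :=
  {s | #s = 3 ∧ Collinear k (p '' s)}

lemma mem_collinearTriples {s : Finset ι} :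
    s ∈ collinearTriples k p ↔ #s = 3 ∧ Collinear k (p '' s) := by
  simp [collinearTriples]

variable (k p) in
/-- The weight `1 / (m - 2)` of a collinear triple `s` on a line with `m` points. Two points on the
line lie in `m - 2` common triples, so that these have total weight `1`. -/
noncomputable def lineWeight (s : Finset ι) : ℝ :=
  1 / (#(indicesInSpan k p s) - 2)

lemma lineWeight_pos {s : Finset ι} (hs : 2 < #s) : 0 < lineWeight k p s := by
  have : 2 < #(indicesInSpan k p s) := hs.trans_le (card_le_card (subset_indicesInSpan s))
  exact one_div_pos.2 (sub_pos.2 (by exact_mod_cast this))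

variable [DecidableEq ι]

lemma indicesInSpan_eq_of_collinear (hp : p.Injective) {s : Finset ι}
    (hs : Collinear k (p '' s)) {i j : ι} (hi : i ∈ s) (hj : j ∈ s) (hij : i ≠ j) :
    indicesInSpan k p s = indicesInSpan k p {i, j} := by
  ext l
  rw [mem_indicesInSpan, mem_indicesInSpan, coe_pair, Set.image_pair,
    hs.affineSpan_eq_of_ne ⟨i, hi, rfl⟩ ⟨j, hj, rfl⟩ (hp.ne hij)]

lemma collinearTriples_filter_pair (hp : p.Injective) {i j : ι} (hij : i ≠ j) :
    {s ∈ collinearTriples k p | i ∈ s ∧ j ∈ s} =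
      (indicesInSpan k p {i, j} \ {i, j}).image fun l ↦ insert l {i, j} := by
  ext s
  simp only [mem_filter, mem_image, mem_sdiff, mem_collinearTriples]
  constructor
  · rintro ⟨⟨hs_card, hs_col⟩, hi, hj⟩
    obtain ⟨l, hl, rfl⟩ := exists_eq_insert_iff.2
      ⟨insert_subset hi (singleton_subset_iff.2 hj), by rw [card_pair hij, hs_card]⟩
    refine ⟨l, ⟨?_, hl⟩, rfl⟩
    rw [← indicesInSpan_eq_of_collinear hp hs_col hi hj hij]
    exact subset_indicesInSpan _ (mem_insert_self l _)
  · rintro ⟨l, ⟨hl_span, hl⟩, rfl⟩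
    refine ⟨⟨by rw [card_insert_of_notMem hl, card_pair hij], ?_⟩, by simp, by simp⟩
    rw [coe_insert, Set.image_insert_eq,
      collinear_insert_iff_of_mem_affineSpan (mem_indicesInSpan.1 hl_span), coe_pair,
      Set.image_pair]
    exact collinear_pair k _ _

lemma card_collinearTriples_filter_pair_add_two (hp : p.Injective) {i j : ι} (hij : i ≠ j) :
    #{s ∈ collinearTriples k p | i ∈ s ∧ j ∈ s} + 2 = #(indicesInSpan k p {i, j}) := by
  have h_inj : Set.InjOn (fun l ↦ insert l ({i, j} : Finset ι))
      ↑(indicesInSpan k p {i, j} \ {i, j}) :=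
    (insert_inj_on {i, j}).mono fun l hl ↦ (mem_sdiff.1 hl).2
  rw [collinearTriples_filter_pair hp hij, card_image_of_injOn h_inj, ← card_pair hij,
    card_sdiff_add_card_eq_card (subset_indicesInSpan _)]

lemma IsSylvesterGallai.sum_lineWeight_pair (h : IsSylvesterGallai k p) (hp : p.Injective)
    {i j : ι} (hij : i ≠ j) :
    ∑ s ∈ collinearTriples k p with i ∈ s ∧ j ∈ s, lineWeight k p s = 1 := by
  have h_weight : ∀ s ∈ collinearTriples k p, i ∈ s ∧ j ∈ s →
      lineWeight k p s = lineWeight k p {i, j} := fun s hs ⟨hi, hj⟩ ↦ by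
    rw [lineWeight, lineWeight,
      indicesInSpan_eq_of_collinear hp (mem_collinearTriples.1 hs).2 hi hj hij]
  have h_three : 2 < #(indicesInSpan k p {i, j}) := by
    obtain ⟨l, hli, hlj, hl⟩ := h i j hij
    rw [← card_pair hij]
    refine card_lt_card (ssubset_iff_of_subset (subset_indicesInSpan _) |>.2 ⟨l, ?_, ?_⟩)
    · rwa [mem_indicesInSpan, coe_pair, Set.image_pair]
    · simp [hli, hlj]
  have h_card : (#{s ∈ collinearTriples k p | i ∈ s ∧ j ∈ s} : ℝ) =
      #(indicesInSpan k p {i, j}) - 2 :=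
    eq_sub_of_add_eq (by exact_mod_cast card_collinearTriples_filter_pair_add_two hp hij)
  rw [sum_congr rfl fun s hs ↦ h_weight s (mem_filter.1 hs).1 (mem_filter.1 hs).2, sum_const,
    nsmul_eq_mul, lineWeight, h_card]
  exact mul_one_div_cancel (sub_pos.2 (by exact_mod_cast h_three)).ne'

theorem IsSylvesterGallai.isFractionalSteinerSystem (h : IsSylvesterGallai k p)
    (hp : p.Injective) :
    IsFractionalSteinerSystem 3 (fun s : collinearTriples k p ↦ s.1)
      fun s ↦ lineWeight k p s.1 where
  card_block s := (mem_collinearTriples.1 s.2).1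
  weight_pos s := lineWeight_pos (by rw [(mem_collinearTriples.1 s.2).1]; norm_num)
  sum_weight_pair i j hij := by
    rw [← h.sum_lineWeight_pair hp hij, sum_filter, sum_filter]
    exact sum_coe_sort _ fun s ↦ if i ∈ s ∧ j ∈ s then lineWeight k p s else 0

end SylvesterGallai

section Kelly

variable {𝕜 V E : Type*} [RCLike 𝕜] [AddCommGroup V] [Module 𝕜 V] [AddTorsor V E]

theorem IsSylvesterGallai.finrank_vectorSpan_le_two {ι : Type*} [Finite ι] {p : ι → E}
    (h : IsSylvesterGallai 𝕜 p) (hp : p.Injective) :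
    finrank 𝕜 (vectorSpan 𝕜 (Set.range p)) ≤ 2 := by
  classical
  have := Fintype.ofFinite ι
  rcases isEmpty_or_nonempty ι with _ | _
  · rw [Set.range_eq_empty p, vectorSpan_empty, finrank_bot]
    exact zero_le_two
  have h_dep (s : collinearTriples 𝕜 p) := exists_affine_dependence_of_collinear hp
    (mem_collinearTriples.1 s.2).1 (mem_collinearTriples.1 s.2).2
  choose A hA hA_sum hA_vsub using h_dep
  have h_dim := finrank_vectorSpan_add_rank_lt_card p (A := Matrix.of A) hA_sum hA_vsub
  have h_rank := (h.isFractionalSteinerSystem hp).card_mul_card_sub_one_le_rank_mul (by norm_num)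
    (A := Matrix.of A) hA
  by_contra! h_three
  have h_card : ((Matrix.of A).rank : ℝ) + 4 ≤ Fintype.card ι := by exact_mod_cast (by omega)
  push_cast at h_rank
  nlinarith

theorem kelly_theorem_complex_affine_general {P : Set E} (hfin : P.Finite)
    (hP : 2 < finrank 𝕜 (vectorSpan 𝕜 P)) :
    ∃ ℓ : AffineSubspace 𝕜 E, finrank 𝕜 ℓ.direction = 1 ∧ (P ∩ (ℓ : Set E)).encard = 2 := by
  by_contra! h
  have := hfin.to_subtype
  have h_dim :=
    (isSylvesterGallai_subtype_val h).finrank_vectorSpan_le_two Subtype.val_injective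
  rw [Subtype.range_coe] at h_dim
  exact h_dim.not_gt hP

end Kelly

/-- Kelly's theorem: a finite set of more than two points in complex affine space `ℂⁿ`
that is not contained in any plane (`2`-dimensional affine subspace) admits a line
containing exactly two of its points. -/
theorem kelly_theorem_complex_affine
    (n : ℕ) (P : Set (Fin n → ℂ)) (hfin : P.Finite) (hcard : 2 < P.ncard)
    (hplane : ¬ ∃ A : AffineSubspace ℂ (Fin n → ℂ),
      Module.finrank ℂ A.direction ≤ 2 ∧ P ⊆ (A : Set (Fin n → ℂ))) :
    ∃ ℓ : AffineSubspace ℂ (Fin n → ℂ), Module.finrank ℂ ℓ.direction = 1 ∧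
      (P ∩ (ℓ : Set (Fin n → ℂ))).encard = 2 :=
  kelly_theorem_complex_affine_general hfin <| not_le.1 fun h ↦
    hplane ⟨affineSpan ℂ P, by rwa [direction_affineSpan], subset_affineSpan ℂ P⟩
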